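/- Every arithmetic expression ends with exactly one of the four operators +, −, ×, ÷; that is, the set 𝒜 of arithmetic expressions is the disjoint union 𝒜 = 𝒜(+) ⊍ 𝒜(−) ⊍ 𝒜(×) ⊍ 𝒜(÷). -/

import Mathlib

/- Common framework: `K = ℝ(x₁,x₂,…)` is the field of rational functions over `ℝ` in
countably many variables (the fraction field of `MvPolynomial ℕ ℝ`), arithmetic
expressions, the permutation action, isomorphism, types, the `EndsWith` classification,
multilinear forms and monicity, isomorphism classes and their counting. -/

open MvPolynomial

noncomputable section

abbrev P : Type := MvPolynomial ℕ ℝ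
abbrev K : Type := FractionRing P

def toK : P →+* K := algebraMap P K

/-- The variable `xᵢ`, as an element of `K`. -/
def Xv (i : ℕ) : K := toK (X i)

/-- `Vars f` : the set of variables on which `f` depends, i.e. the variables occurring in a
representation of `f` as a quotient of two coprime polynomials. -/
def Vars (f : K) : Set ℕ :=
  {i | ∃ p q : P, q ≠ 0 ∧ IsRelPrime p q ∧ f = toK p / toK q ∧ (i ∈ p.vars ∨ i ∈ q.vars)}

/-- `𝒜` : the smallest subset of `K` containing every variable and closed under the four
binary operations applied to expressions with disjoint variable sets. -/
inductive IsAE : K → Prop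
  | var (i : ℕ) : IsAE (Xv i)
  | add {g h : K} : IsAE g → IsAE h → Disjoint (Vars g) (Vars h) → IsAE (g + h)
  | sub {g h : K} : IsAE g → IsAE h → Disjoint (Vars g) (Vars h) → IsAE (g - h)
  | mul {g h : K} : IsAE g → IsAE h → Disjoint (Vars g) (Vars h) → IsAE (g * h)
  | div {g h : K} : IsAE g → IsAE h → Disjoint (Vars g) (Vars h) → IsAE (g / h)

/-- The action `σ·f` of a permutation of the variables on `K`, substituting `σ(xᵢ)` for `xᵢ`. -/
def permAct (σ : Equiv.Perm ℕ) : K ≃+* K :=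
  IsFractionRing.ringEquivOfRingEquiv (renameEquiv ℝ σ).toRingEquiv

/-- `f ≅ g` : `f` and `g` are isomorphic, i.e. differ by a permutation of the variables. -/
def Iso (f g : K) : Prop := ∃ σ : Equiv.Perm ℕ, permAct σ f = g

/-- First type: `-f ∉ 𝒜`. -/
def FirstType (f : K) : Prop := IsAE f ∧ ¬ IsAE (-f)

/-- Second type: `-f ∈ 𝒜` but `f ≇ -f`. -/
def SecondType (f : K) : Prop := IsAE f ∧ IsAE (-f) ∧ ¬ Iso f (-f)

/-- Third type: `-f ∈ 𝒜` and `f ≅ -f`. -/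
def ThirdType (f : K) : Prop := IsAE f ∧ IsAE (-f) ∧ Iso f (-f)

/-- The four binary operators. -/
inductive Op : Type
  | add | sub | mul | div
deriving DecidableEq

/-- `EndsWith f o` : the arithmetic expression `f` ends with the operator `o`. -/
inductive EndsWith : K → Op → Prop
  | var (i : ℕ) : EndsWith (Xv i) Op.mul
  | add_base {i j : ℕ} (hij : i ≠ j) : EndsWith (Xv i + Xv j) Op.add
  | sub_base {i j : ℕ} (hij : i ≠ j) : EndsWith (Xv i - Xv j) Op.sub
  | mul_base {i j : ℕ} (hij : i ≠ j) : EndsWith (Xv i * Xv j) Op.mul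
  | div_base {i j : ℕ} (hij : i ≠ j) : EndsWith (Xv i / Xv j) Op.div
  | add_rec {g h : K} {o₁ o₂ : Op} : IsAE g → IsAE h → Disjoint (Vars g) (Vars h) →
      3 ≤ (Vars (g + h)).ncard → o₁ ≠ Op.sub → o₂ ≠ Op.sub →
      EndsWith g o₁ → EndsWith h o₂ → EndsWith (g + h) Op.add
  | mul_rec {g h : K} {o₁ o₂ : Op} : IsAE g → IsAE h → Disjoint (Vars g) (Vars h) →
      3 ≤ (Vars (g * h)).ncard → o₁ ≠ Op.div → o₂ ≠ Op.div →
      EndsWith g o₁ → EndsWith h o₂ → EndsWith (g * h) Op.mul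
  | div_rec {g h : K} {o₁ o₂ : Op} : IsAE g → IsAE h → Disjoint (Vars g) (Vars h) →
      3 ≤ (Vars (g / h)).ncard → o₁ ≠ Op.div → o₂ ≠ Op.div →
      EndsWith g o₁ → EndsWith h o₂ → EndsWith (g / h) Op.div
  | sub_rec {g h : K} {o₁ o₂ : Op} : IsAE g → IsAE h → Disjoint (Vars g) (Vars h) →
      3 ≤ (Vars (g - h)).ncard → o₁ ≠ Op.sub → o₂ ≠ Op.sub → FirstType h →
      EndsWith g o₁ → EndsWith h o₂ → EndsWith (g - h) Op.sub

/-- `f` ends with one of the operators in `s`. -/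
def EndsIn (f : K) (s : Set Op) : Prop := ∃ o ∈ s, EndsWith f o

/-- The binary operation on `K` corresponding to an operator. -/
def applyOp (o : Op) (a b : K) : K :=
  match o with
  | Op.add => a + b
  | Op.sub => a - b
  | Op.mul => a * b
  | Op.div => a / b

/-- The variable index set `{1, …, n}` (for the variables `x₁, …, xₙ`). -/
def varsUpTo (n : ℕ) : Set ℕ := {i | 1 ≤ i ∧ i ≤ n}

/-- `𝒜ₙ` : arithmetic expressions whose variable set is exactly `{x₁, …, xₙ}`. -/
def AEn (n : ℕ) : Set K := {f | IsAE f ∧ Vars f = varsUpTo n}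

/-- A multilinear polynomial: degree at most `1` in each variable. -/
def Multilinear (p : P) : Prop := ∀ i : ℕ, p.degreeOf i ≤ 1

/-- The key of a (multilinear) monomial: the sorted list of variables occurring in it;
keys are compared in the lexicographic order on lists. -/
def monKey (m : ℕ →₀ ℕ) : List ℕ := m.support.sort (· ≤ ·)

/-- A (multilinear) polynomial is monic if the coefficient of its lexicographically
leading (i.e. first) monomial is positive. -/
def MonicML (p : P) : Prop :=
  ∃ m ∈ p.support, 0 < p.coeff m ∧ ∀ m' ∈ p.support, monKey m ≤ monKey m'

/-- `MLForm f F₁ F₂` : `F₁ / F₂` is the multilinear form of `f`: `F₁, F₂` are coprime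
multilinear polynomials, `F₂` is monic, and `f = F₁ / F₂`. -/
def MLForm (f : K) (F₁ F₂ : P) : Prop :=
  Multilinear F₁ ∧ Multilinear F₂ ∧ IsRelPrime F₁ F₂ ∧ F₂ ≠ 0 ∧ MonicML F₂ ∧
    f = toK F₁ / toK F₂

/-- A monic arithmetic expression: the numerator of its multilinear form is monic as well. -/
def MonicAE (f : K) : Prop := ∃ F₁ F₂ : P, MLForm f F₁ F₂ ∧ MonicML F₁

/-- The isomorphism class of `f`. -/
def classOf (f : K) : Set K := {g | Iso f g}

/-- `S̄` : the set of isomorphism classes of elements of `S`. -/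
def classes (S : Set K) : Set (Set K) := classOf '' S

/-- `|S̄|` : the number of isomorphism classes of elements of `S`. -/
def countClasses (S : Set K) : ℕ := (classes S).ncard

/-- The number of isomorphism classes of elements of `S` depending on exactly `k` variables. -/
def gradeCount (S : Set K) (k : ℕ) : ℕ := countClasses {f ∈ S | (Vars f).ncard = k}

/-- `ω_n` for a graded family having `N k` elements in grade `k` : the sum over all
partitions `(k₁^{m₁},…,k_s^{m_s})` of `n` of `∏ⱼ C(N kⱼ + mⱼ - 1, mⱼ)`. -/
def omega (N : ℕ → ℕ) (n : ℕ) : ℕ :=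
  ∑ p : n.Partition,
    ∏ k ∈ p.parts.toFinset, Nat.choose (N k + p.parts.count k - 1) (p.parts.count k)

/-- `ω_n′` : the same sum restricted to non-trivial partitions, i.e. `ω_n - N n`. -/
def omega' (N : ℕ → ℕ) (n : ℕ) : ℕ := omega N n - N n

/-- `𝒜(s)` : arithmetic expressions ending with one of the operators in `s`. -/
def Aset (s : Set Op) : Set K := {f | IsAE f ∧ EndsIn f s}

/-- `ℱ(s)` : first-type arithmetic expressions ending with one of the operators in `s`. -/
def Fset (s : Set Op) : Set K := {f | FirstType f ∧ EndsIn f s}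

/-- `ℬ(s)` : second-type arithmetic expressions ending with one of the operators in `s`. -/
def Bset (s : Set Op) : Set K := {f | SecondType f ∧ EndsIn f s}

/-- `𝒞(s)` : third-type arithmetic expressions ending with one of the operators in `s`. -/
def Cset (s : Set Op) : Set K := {f | ThirdType f ∧ EndsIn f s}

/-- `ℳℬ(s)` : monic second-type arithmetic expressions ending with an operator in `s`. -/
def MBset (s : Set Op) : Set K := {f | SecondType f ∧ MonicAE f ∧ EndsIn f s}


lemma toK_inj {p q : P} : toK p = toK q ↔ p = q :=
  (IsFractionRing.injective P K).eq_iff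

lemma toK_ne_zero {q : P} (hq : q ≠ 0) : toK q ≠ 0 := by
  intro h
  exact hq (toK_inj.1 (h.trans (map_zero toK).symm))

lemma exists_rep (f : K) : ∃ p q : P, q ≠ 0 ∧ IsRelPrime p q ∧ f = toK p / toK q :=
  ⟨IsFractionRing.num P f, IsFractionRing.den P f, nonZeroDivisors.coe_ne_zero _,
    IsFractionRing.num_den_reduced P f, (IsFractionRing.mk'_num_den' P f).symm⟩

lemma pderiv_swap (i j : ℕ) (p : P) : pderiv i (pderiv j p) = pderiv j (pderiv i p) := by
  have h : ⁅(pderiv i : Derivation ℝ P P), (pderiv j : Derivation ℝ P P)⁆ = 0 := by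
    apply MvPolynomial.derivation_ext
    intro k
    rw [Derivation.commutator_apply]
    simp only [pderiv_X, Pi.single_apply, Derivation.coe_zero, Pi.zero_apply]
    split_ifs <;> simp
  have := congrArg (fun d => d p) h
  simp only [Derivation.commutator_apply, Derivation.coe_zero, Pi.zero_apply] at this
  exact sub_eq_zero.1 this

lemma notMem_vars_of_pderiv {i : ℕ} {p : P} (h : pderiv i p = 0) : i ∉ p.vars := by
  intro hi
  obtain ⟨m, hm, him⟩ := (mem_vars_iff_mem_support i).1 hi
  have hmi : m i ≠ 0 := Finsupp.mem_support_iff.1 him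
  have := coeff_pderiv (i := i) p (m - Finsupp.single i 1)
  rw [h, tsub_add_cancel_of_le (by
    rw [Finsupp.single_le_iff]; omega)] at this
  simp only [coeff_zero] at this
  have h2 := mem_support_iff.1 hm
  rcases mul_eq_zero.1 this.symm with h3 | h3
  · exact h2 h3
  · norm_cast at h3

lemma pderiv_eq_zero_of_dvd {i : ℕ} {q : P} (hq : q ≠ 0) (h : q ∣ pderiv i q) :
    pderiv i q = 0 := by
  by_contra hne
  obtain ⟨r, hr⟩ := h
  have hr0 : r ≠ 0 := by rintro rfl; simp at hr; exact hne hr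
  have hd : degreeOf i (pderiv i q) = degreeOf i q + degreeOf i r := by
    conv_lhs => rw [hr]
    exact degreeOf_mul_eq hq hr0
  have hlt : degreeOf i (pderiv i q) < degreeOf i q := by
    have hpos : 0 < degreeOf i q := by
      rw [Nat.pos_iff_ne_zero]
      intro h0
      apply hne
      apply pderiv_eq_zero_of_notMem_vars
      classical
      intro hi
      rw [vars_def, Multiset.mem_toFinset] at hi
      rw [degreeOf_def, Multiset.count_eq_zero] at h0
      exact h0 hi
    rw [degreeOf_lt_iff hpos]
    intro m hm
    have h1 := mem_support_iff.1 hm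
    rw [coeff_pderiv] at h1
    have h2 : m + Finsupp.single i 1 ∈ q.support :=
      mem_support_iff.2 (left_ne_zero_of_mul h1)
    have := monomial_le_degreeOf i h2
    simp at this
    omega
  omega

/-- Partial derivative on `K`. -/
def D (i : ℕ) (f : K) : K :=
  let p := IsFractionRing.num P f
  let q : P := IsFractionRing.den P f
  (toK (pderiv i p) * toK q - toK p * toK (pderiv i q)) / toK q ^ 2

lemma D_rep (i : ℕ) (p q : P) (hq : q ≠ 0) :
    D i (toK p / toK q) =
      (toK (pderiv i p) * toK q - toK p * toK (pderiv i q)) / toK q ^ 2 := by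
  set f : K := toK p / toK q with hf
  obtain ⟨r, hr⟩ : ∃ r, r = IsFractionRing.num P f := ⟨_, rfl⟩
  obtain ⟨s, hs⟩ : ∃ s : P, s = IsFractionRing.den P f := ⟨_, rfl⟩
  have hs0 : s ≠ 0 := hs ▸ nonZeroDivisors.coe_ne_zero _
  have e : toK r / toK s = f := by
    rw [hr, hs]; exact IsFractionRing.mk'_num_den' P f
  have hD : D i f = (toK (pderiv i r) * toK s - toK r * toK (pderiv i s)) / toK s ^ 2 := by
    rw [hr, hs]; rfl
  rw [hD]
  have hq' := toK_ne_zero hq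
  have hs' := toK_ne_zero hs0
  rw [hf, div_eq_div_iff hs' hq'] at e
  have e0 : r * q = p * s := by
    apply toK_inj.1; simpa using e
  have e1 := congrArg (fun t => toK (pderiv i t)) e0
  simp only [pderiv_mul, map_add, map_mul] at e1
  rw [div_eq_div_iff (pow_ne_zero 2 hs') (pow_ne_zero 2 hq')]
  linear_combination (toK q * toK s) * e1 - (toK s * toK (pderiv i q) + toK q * toK (pderiv i s)) * e

lemma D_toK (i : ℕ) (p : P) : D i (toK p) = toK (pderiv i p) := by
  have := D_rep i p 1 one_ne_zero
  simpa using this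

lemma D_Xv_self (i : ℕ) : D i (Xv i) = 1 := by simp [Xv, D_toK]
lemma D_Xv_ne {i j : ℕ} (h : j ≠ i) : D i (Xv j) = 0 := by simp [Xv, D_toK, pderiv_X_of_ne h]

lemma D_add (i : ℕ) (f g : K) : D i (f + g) = D i f + D i g := by
  obtain ⟨p, q, hq, -, rfl⟩ := exists_rep f
  obtain ⟨r, s, hs, -, rfl⟩ := exists_rep g
  have hq' := toK_ne_zero hq
  have hs' := toK_ne_zero hs
  have : toK p / toK q + toK r / toK s = toK (p * s + q * r) / toK (q * s) := by
    simp only [map_add, map_mul]; field_simp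
  rw [this, D_rep i _ _ (mul_ne_zero hq hs), D_rep i _ _ hq, D_rep i _ _ hs]
  simp only [pderiv_mul, map_add, map_mul]
  field_simp
  ring

lemma D_mul (i : ℕ) (f g : K) : D i (f * g) = D i f * g + f * D i g := by
  obtain ⟨p, q, hq, -, rfl⟩ := exists_rep f
  obtain ⟨r, s, hs, -, rfl⟩ := exists_rep g
  have hq' := toK_ne_zero hq
  have hs' := toK_ne_zero hs
  have : toK p / toK q * (toK r / toK s) = toK (p * r) / toK (q * s) := by
    simp only [map_mul]; field_simp
  rw [this, D_rep i _ _ (mul_ne_zero hq hs), D_rep i _ _ hq, D_rep i _ _ hs]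
  simp only [pderiv_mul, map_add, map_mul]
  field_simp
  ring

lemma D_zero (i : ℕ) : D i 0 = 0 := by
  have := D_add i 0 0
  simpa using this

lemma D_one (i : ℕ) : D i 1 = 0 := by
  have := D_mul i 1 1
  simpa using this

lemma D_neg (i : ℕ) (f : K) : D i (-f) = - D i f := by
  have := D_add i f (-f)
  rw [add_neg_cancel, D_zero] at this
  linear_combination -this

lemma D_sub (i : ℕ) (f g : K) : D i (f - g) = D i f - D i g := by
  rw [sub_eq_add_neg, D_add, D_neg, sub_eq_add_neg]

lemma D_div (i : ℕ) (f : K) {g : K} (hg : g ≠ 0) :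
    D i (f / g) = (D i f * g - f * D i g) / g ^ 2 := by
  have := D_mul i (f / g) g
  rw [div_mul_cancel₀ f hg] at this
  rw [this]; field_simp; ring

lemma D_comm (i j : ℕ) (f : K) : D i (D j f) = D j (D i f) := by
  obtain ⟨p, q, hq, -, rfl⟩ := exists_rep f
  have hq' := toK_ne_zero hq
  have hq2 := pow_ne_zero 2 hq
  have h (k : ℕ) : (toK (pderiv k p) * toK q - toK p * toK (pderiv k q)) / toK q ^ 2
    = toK (pderiv k p * q - p * pderiv k q) / toK (q ^ 2) := by simp
  rw [D_rep _ _ _ hq, D_rep _ _ _ hq, h, h, D_rep _ _ _ hq2, D_rep _ _ _ hq2]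
  simp only [pow_two, pderiv_mul, map_add, map_mul, map_sub, pderiv_swap j i]
  field_simp
  ring

lemma mem_Vars {i : ℕ} {f : K} : i ∈ Vars f ↔ D i f ≠ 0 := by
  constructor
  · rintro ⟨p, q, hq, hpq, rfl, h⟩ h0
    have hq' := toK_ne_zero hq
    rw [D_rep _ _ _ hq, div_eq_zero_iff] at h0
    have h1 := h0.resolve_right (pow_ne_zero 2 hq')
    have h2 : pderiv i p * q = p * pderiv i q := by
      apply toK_inj.1
      simp only [map_mul]
      exact sub_eq_zero.1 h1
    have h3 : q ∣ pderiv i q := hpq.symm.dvd_of_dvd_mul_left ⟨pderiv i p, by rw [← h2]; ring⟩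
    have h4 := pderiv_eq_zero_of_dvd hq h3
    have h5 : pderiv i p = 0 := by
      rw [h4, mul_zero] at h2
      exact (mul_eq_zero.1 h2).resolve_right hq
    exact h.elim (notMem_vars_of_pderiv h5) (notMem_vars_of_pderiv h4)
  · intro h
    obtain ⟨p, q, hq, hpq, rfl⟩ := exists_rep f
    refine ⟨p, q, hq, hpq, rfl, ?_⟩
    by_contra hn
    push Not at hn
    apply h
    rw [D_rep _ _ _ hq, pderiv_eq_zero_of_notMem_vars hn.1, pderiv_eq_zero_of_notMem_vars hn.2]
    simp

lemma notMem_Vars {i : ℕ} {f : K} : i ∉ Vars f ↔ D i f = 0 := by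
  rw [mem_Vars, not_not]

lemma Vars_Xv (i : ℕ) : Vars (Xv i) = {i} := by
  ext j
  rw [mem_Vars, Set.mem_singleton_iff]
  by_cases h : j = i
  · subst h; simp [D_Xv_self]
  · simp [D_Xv_ne (Ne.symm h), h]

lemma Vars_neg (f : K) : Vars (-f) = Vars f := by
  ext j; simp [mem_Vars, D_neg]

lemma disj_zero {g h : K} (hd : Disjoint (Vars g) (Vars h)) (y : ℕ) : D y g = 0 ∨ D y h = 0 := by
  by_contra hn
  push Not at hn
  exact Set.disjoint_left.1 hd (mem_Vars.2 hn.1) (mem_Vars.2 hn.2)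

lemma Vars_add {g h : K} (hd : Disjoint (Vars g) (Vars h)) : Vars (g + h) = Vars g ∪ Vars h := by
  ext y
  rw [Set.mem_union, mem_Vars, mem_Vars, mem_Vars, D_add]
  rcases disj_zero hd y with h | h <;> simp [h]

lemma Vars_sub {g h : K} (hd : Disjoint (Vars g) (Vars h)) : Vars (g - h) = Vars g ∪ Vars h := by
  ext y
  rw [Set.mem_union, mem_Vars, mem_Vars, mem_Vars, D_sub]
  rcases disj_zero hd y with h | h <;> simp [h]

lemma Vars_mul {g h : K} (hd : Disjoint (Vars g) (Vars h)) (hg : g ≠ 0) (hh : h ≠ 0) :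
    Vars (g * h) = Vars g ∪ Vars h := by
  ext y
  rw [Set.mem_union, mem_Vars, mem_Vars, mem_Vars, D_mul]
  rcases disj_zero hd y with h | h <;> simp [h, hg, hh]

lemma Vars_div {g h : K} (hd : Disjoint (Vars g) (Vars h)) (hg : g ≠ 0) (hh : h ≠ 0) :
    Vars (g / h) = Vars g ∪ Vars h := by
  ext y
  rw [Set.mem_union, mem_Vars, mem_Vars, mem_Vars, D_div _ _ hh]
  rcases disj_zero hd y with h | h <;> simp [h, hg, hh]

lemma ne_zero_of_mem {f : K} {i : ℕ} (h : i ∈ Vars f) : f ≠ 0 := by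
  rintro rfl
  exact mem_Vars.1 h (D_zero i)

lemma IsAE.nonempty {f : K} (h : IsAE f) : (Vars f).Nonempty := by
  induction h with
  | var i => rw [Vars_Xv]; exact Set.singleton_nonempty i
  | add _ _ hd h1 _ => rw [Vars_add hd]; exact h1.inl
  | sub _ _ hd h1 _ => rw [Vars_sub hd]; exact h1.inl
  | mul _ _ hd h1 h2 =>
    rw [Vars_mul hd (ne_zero_of_mem h1.some_mem) (ne_zero_of_mem h2.some_mem)]; exact h1.inl
  | div _ _ hd h1 h2 =>
    rw [Vars_div hd (ne_zero_of_mem h1.some_mem) (ne_zero_of_mem h2.some_mem)]; exact h1.inl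

lemma IsAE.ne_zero {f : K} (h : IsAE f) : f ≠ 0 := ne_zero_of_mem h.nonempty.some_mem

lemma IsAE.finite {f : K} (h : IsAE f) : (Vars f).Finite := by
  induction h with
  | var i => rw [Vars_Xv]; exact Set.finite_singleton i
  | add _ _ hd h1 h2 => rw [Vars_add hd]; exact h1.union h2
  | sub _ _ hd h1 h2 => rw [Vars_sub hd]; exact h1.union h2
  | mul a b hd h1 h2 => rw [Vars_mul hd a.ne_zero b.ne_zero]; exact h1.union h2
  | div a b hd h1 h2 => rw [Vars_div hd a.ne_zero b.ne_zero]; exact h1.union h2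

lemma IsAE.card_pos {f : K} (h : IsAE f) : 0 < (Vars f).ncard :=
  (Set.ncard_pos h.finite).2 h.nonempty

lemma card_union {g h : K} (a : IsAE g) (b : IsAE h) (hd : Disjoint (Vars g) (Vars h)) :
    (Vars g ∪ Vars h).ncard = (Vars g).ncard + (Vars h).ncard :=
  Set.ncard_union_eq hd a.finite b.finite

lemma IsAE.eq_var {f : K} (h : IsAE f) (h1 : (Vars f).ncard = 1) : ∃ i, f = Xv i := by
  cases h with
  | var i => exact ⟨i, rfl⟩
  | add a b hd =>
    rw [Vars_add hd, card_union a b hd] at h1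
    have := a.card_pos; have := b.card_pos; omega
  | sub a b hd =>
    rw [Vars_sub hd, card_union a b hd] at h1
    have := a.card_pos; have := b.card_pos; omega
  | mul a b hd =>
    rw [Vars_mul hd a.ne_zero b.ne_zero, card_union a b hd] at h1
    have := a.card_pos; have := b.card_pos; omega
  | div a b hd =>
    rw [Vars_div hd a.ne_zero b.ne_zero, card_union a b hd] at h1
    have := a.card_pos; have := b.card_pos; omega

lemma firstType_var (j : ℕ) : FirstType (Xv j) := by
  refine ⟨.var j, fun h => ?_⟩
  obtain ⟨i, hi⟩ := h.eq_var (by rw [Vars_neg, Vars_Xv]; simp)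
  have h1 := congrArg (D j) hi
  rw [D_neg, D_Xv_self] at h1
  by_cases hij : i = j
  · subst hij; rw [D_Xv_self] at h1; norm_num at h1
  · rw [D_Xv_ne hij] at h1; norm_num at h1

lemma disj_var {i j : ℕ} (h : i ≠ j) : Disjoint (Vars (Xv i)) (Vars (Xv j)) := by
  rw [Vars_Xv, Vars_Xv]; simpa using h

/-- A version of `EndsWith` without the cardinality conditions. -/
inductive EW : K → Op → Prop
  | var (i : ℕ) : EW (Xv i) Op.mul
  | add {g h : K} {o₁ o₂ : Op} : IsAE g → IsAE h → Disjoint (Vars g) (Vars h) →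
      o₁ ≠ Op.sub → o₂ ≠ Op.sub → EW g o₁ → EW h o₂ → EW (g + h) Op.add
  | mul {g h : K} {o₁ o₂ : Op} : IsAE g → IsAE h → Disjoint (Vars g) (Vars h) →
      o₁ ≠ Op.div → o₂ ≠ Op.div → EW g o₁ → EW h o₂ → EW (g * h) Op.mul
  | div {g h : K} {o₁ o₂ : Op} : IsAE g → IsAE h → Disjoint (Vars g) (Vars h) →
      o₁ ≠ Op.div → o₂ ≠ Op.div → EW g o₁ → EW h o₂ → EW (g / h) Op.div
  | sub {g h : K} {o₁ o₂ : Op} : IsAE g → IsAE h → Disjoint (Vars g) (Vars h) →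
      o₁ ≠ Op.sub → o₂ ≠ Op.sub → FirstType h → EW g o₁ → EW h o₂ → EW (g - h) Op.sub

lemma EndsWith.ew {f : K} {o : Op} (h : EndsWith f o) : EW f o := by
  induction h with
  | var i => exact .var i
  | add_base h => exact .add (.var _) (.var _) (disj_var h) (by simp) (by simp) (.var _) (.var _)
  | mul_base h => exact .mul (.var _) (.var _) (disj_var h) (by simp) (by simp) (.var _) (.var _)
  | div_base h => exact .div (.var _) (.var _) (disj_var h) (by simp) (by simp) (.var _) (.var _)
  | sub_base h =>
    exact .sub (.var _) (.var _) (disj_var h) (by simp) (by simp) (firstType_var _) (.var _) (.var _)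
  | add_rec a b hd _ h1 h2 _ _ i1 i2 => exact .add a b hd h1 h2 i1 i2
  | mul_rec a b hd _ h1 h2 _ _ i1 i2 => exact .mul a b hd h1 h2 i1 i2
  | div_rec a b hd _ h1 h2 _ _ i1 i2 => exact .div a b hd h1 h2 i1 i2
  | sub_rec a b hd _ h1 h2 hf _ _ i1 i2 => exact .sub a b hd h1 h2 hf i1 i2

lemma card_cases {g h : K} (a : IsAE g) (b : IsAE h) (hd : Disjoint (Vars g) (Vars h)) :
    3 ≤ (Vars g ∪ Vars h).ncard ∨ ∃ i j, i ≠ j ∧ g = Xv i ∧ h = Xv j := by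
  rw [card_union a b hd]
  by_cases h3 : 3 ≤ (Vars g).ncard + (Vars h).ncard
  · exact .inl h3
  · right
    have := a.card_pos
    have := b.card_pos
    obtain ⟨i, rfl⟩ := a.eq_var (by omega)
    obtain ⟨j, rfl⟩ := b.eq_var (by omega)
    refine ⟨i, j, ?_, rfl, rfl⟩
    rw [Vars_Xv, Vars_Xv] at hd
    simpa using hd

lemma EW.ends {f : K} {o : Op} (h : EW f o) : EndsWith f o := by
  induction h with
  | var i => exact .var i
  | add a b hd h1 h2 _ _ i1 i2 =>
    rcases card_cases a b hd with hc | ⟨i, j, hij, rfl, rfl⟩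
    · exact .add_rec a b hd (by rwa [Vars_add hd]) h1 h2 i1 i2
    · exact .add_base hij
  | mul a b hd h1 h2 _ _ i1 i2 =>
    rcases card_cases a b hd with hc | ⟨i, j, hij, rfl, rfl⟩
    · exact .mul_rec a b hd (by rwa [Vars_mul hd a.ne_zero b.ne_zero]) h1 h2 i1 i2
    · exact .mul_base hij
  | div a b hd h1 h2 _ _ i1 i2 =>
    rcases card_cases a b hd with hc | ⟨i, j, hij, rfl, rfl⟩
    · exact .div_rec a b hd (by rwa [Vars_div hd a.ne_zero b.ne_zero]) h1 h2 i1 i2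
    · exact .div_base hij
  | sub a b hd h1 h2 hf _ _ i1 i2 =>
    rcases card_cases a b hd with hc | ⟨i, j, hij, rfl, rfl⟩
    · exact .sub_rec a b hd (by rwa [Vars_sub hd]) h1 h2 hf i1 i2
    · exact .sub_base hij

lemma EW.isAE {f : K} {o : Op} (h : EW f o) : IsAE f := by
  cases h with
  | var i => exact .var i
  | add a b hd => exact .add a b hd
  | mul a b hd => exact .mul a b hd
  | div a b hd => exact .div a b hd
  | sub a b hd => exact .sub a b hd

/-- Ends with something other than `−`. -/
def NS (f : K) : Prop := ∃ o, o ≠ Op.sub ∧ EW f o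
/-- Ends with something other than `÷`. -/
def ND (f : K) : Prop := ∃ o, o ≠ Op.div ∧ EW f o

lemma NS.isAE {f : K} (h : NS f) : IsAE f := h.choose_spec.2.isAE
lemma ND.isAE {f : K} (h : ND f) : IsAE f := h.choose_spec.2.isAE

lemma NS.add {f g : K} (hf : NS f) (hg : NS g) (hd : Disjoint (Vars f) (Vars g)) :
    NS (f + g) := by
  have a := hf.isAE
  have b := hg.isAE
  obtain ⟨o, h1, h2⟩ := hf
  obtain ⟨o', h3, h4⟩ := hg
  exact ⟨.add, by simp, .add a b hd h1 h3 h2 h4⟩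

lemma ND.mul {f g : K} (hf : ND f) (hg : ND g) (hd : Disjoint (Vars f) (Vars g)) :
    ND (f * g) := by
  have a := hf.isAE
  have b := hg.isAE
  obtain ⟨o, h1, h2⟩ := hf
  obtain ⟨o', h3, h4⟩ := hg
  exact ⟨.mul, by simp, .mul a b hd h1 h3 h2 h4⟩

lemma ND.div {f g : K} (hf : ND f) (hg : ND g) (hd : Disjoint (Vars f) (Vars g)) :
    EW (f / g) .div := by
  have a := hf.isAE
  have b := hg.isAE
  obtain ⟨o, h1, h2⟩ := hf
  obtain ⟨o', h3, h4⟩ := hg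
  exact .div a b hd h1 h3 h2 h4

lemma NS.sub {f g : K} (hf : NS f) (hg : NS g) (hd : Disjoint (Vars f) (Vars g))
    (ht : FirstType g) : EW (f - g) .sub := by
  have a := hf.isAE
  have b := hg.isAE
  obtain ⟨o, h1, h2⟩ := hf
  obtain ⟨o', h3, h4⟩ := hg
  exact .sub a b hd h1 h3 ht h2 h4

lemma ND.vmul {f g : K} (hf : ND f) (hg : ND g) (hd : Disjoint (Vars f) (Vars g)) :
    Vars (f * g) = Vars f ∪ Vars g := Vars_mul hd hf.isAE.ne_zero hg.isAE.ne_zero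

lemma EW.splitSub {f : K} {o : Op} (h : EW f o) : NS f ∨ ∃ p q, NS p ∧ NS q ∧ FirstType q ∧
    Disjoint (Vars p) (Vars q) ∧ f = p - q := by
  by_cases ho : o = .sub
  · subst ho
    right
    cases h with
    | sub a b hd h1 h2 hf i1 i2 => exact ⟨_, _, ⟨_, h1, i1⟩, ⟨_, h2, i2⟩, hf, hd, rfl⟩
  · exact .inl ⟨o, ho, h⟩

lemma EW.splitDiv {f : K} {o : Op} (h : EW f o) : ND f ∨ ∃ p q, ND p ∧ ND q ∧
    Disjoint (Vars p) (Vars q) ∧ f = p / q := by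
  by_cases ho : o = .div
  · subst ho
    right
    cases h with
    | div a b hd h1 h2 i1 i2 => exact ⟨_, _, ⟨_, h1, i1⟩, ⟨_, h2, i2⟩, hd, rfl⟩
  · exact .inl ⟨o, ho, h⟩

lemma ND.ew {f : K} (h : ND f) : ∃ o, EW f o := ⟨_, h.choose_spec.2⟩
lemma NS.ew {f : K} (h : NS f) : ∃ o, EW f o := ⟨_, h.choose_spec.2⟩

/-- Difference of two non-`−` expressions, given that `-q` is already handled. -/
lemma NS.sub_ew {p q : K} (hp : NS p) (hq : NS q) (hd : Disjoint (Vars p) (Vars q))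
    (ih : IsAE (-q) → ∃ o, EW (-q) o) : ∃ o, EW (p - q) o := by
  by_cases hn : IsAE (-q)
  · obtain ⟨o, ho⟩ := ih hn
    have hd' : Disjoint (Vars p) (Vars (-q)) := by rwa [Vars_neg]
    rcases ho.splitSub with h | ⟨c, d, hc, hdd, hf, hcd, e⟩
    · rw [sub_eq_add_neg]
      exact (hp.add h hd').ew
    · rw [e, Vars_sub hcd, Set.disjoint_union_right] at hd'
      refine ⟨.sub, ?_⟩
      rw [sub_eq_add_neg, e, show p + (c - d) = (p + c) - d by ring]
      refine (hp.add hc hd'.1).sub hdd ?_ hf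
      rw [Vars_add hd'.1, Set.disjoint_union_left]
      exact ⟨hd'.2, hcd⟩
  · exact ⟨_, hp.sub hq hd ⟨hq.isAE, hn⟩⟩

lemma exists_ew : ∀ (n : ℕ) (f : K), (Vars f).ncard = n → IsAE f → ∃ o, EW f o := by
  intro n
  induction n using Nat.strong_induction_on with
  | _ n ih =>
  intro f hn hf
  -- differences of two non-`−` expressions with the variables of `f`
  have key : ∀ p q, NS p → NS q → Disjoint (Vars p) (Vars q) → f = p - q → ∃ o, EW f o := by
    rintro p q hp hq hd rfl
    refine hp.sub_ew hq hd (fun h => ih _ ?_ (-q) rfl h)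
    rw [Vars_neg, ← hn, Vars_sub hd, card_union hp.isAE hq.isAE hd]
    have := hp.isAE.card_pos
    omega
  cases hf with
  | var i => exact ⟨_, .var i⟩
  | @add g h a b hd =>
    have hc : (Vars g).ncard + (Vars h).ncard = n := by
      rw [← hn, Vars_add hd, card_union a b hd]
    have := a.card_pos
    have := b.card_pos
    obtain ⟨o₁, h1⟩ := ih _ (by omega) g rfl a
    obtain ⟨o₂, h2⟩ := ih _ (by omega) h rfl b
    rcases h1.splitSub with h1 | ⟨p, q, hp, hq, -, hpq, rfl⟩ <;>
    rcases h2.splitSub with h2 | ⟨r, s, hr, hs, -, hrs, rfl⟩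
    · exact (h1.add h2 hd).ew
    · rw [Vars_sub hrs, Set.disjoint_union_right] at hd
      refine key (g + r) s (h1.add hr hd.1) hs ?_ (by ring)
      rw [Vars_add hd.1, Set.disjoint_union_left]
      exact ⟨hd.2, hrs⟩
    · rw [Vars_sub hpq, Set.disjoint_union_left] at hd
      refine key (p + h) q (hp.add h2 hd.1) hq ?_ (by ring)
      rw [Vars_add hd.1, Set.disjoint_union_left]
      exact ⟨hpq, hd.2.symm⟩
    · rw [Vars_sub hpq, Vars_sub hrs, Set.disjoint_union_left, Set.disjoint_union_right,
        Set.disjoint_union_right] at hd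
      obtain ⟨⟨d1, d2⟩, d3, d4⟩ := hd
      refine key (p + r) (q + s) (hp.add hr d1) (hq.add hs d4) ?_ (by ring)
      rw [Vars_add d1, Vars_add d4, Set.disjoint_union_left, Set.disjoint_union_right,
        Set.disjoint_union_right]
      exact ⟨⟨hpq, d2⟩, d3.symm, hrs⟩
  | @sub g h a b hd =>
    have hc : (Vars g).ncard + (Vars h).ncard = n := by
      rw [← hn, Vars_sub hd, card_union a b hd]
    have := a.card_pos
    have := b.card_pos
    obtain ⟨o₁, h1⟩ := ih _ (by omega) g rfl a
    obtain ⟨o₂, h2⟩ := ih _ (by omega) h rfl b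
    rcases h1.splitSub with h1 | ⟨p, q, hp, hq, -, hpq, rfl⟩ <;>
    rcases h2.splitSub with h2 | ⟨r, s, hr, hs, -, hrs, rfl⟩
    · exact key g h h1 h2 hd rfl
    · rw [Vars_sub hrs, Set.disjoint_union_right] at hd
      refine key (g + s) r (h1.add hs hd.2) hr ?_ (by ring)
      rw [Vars_add hd.2, Set.disjoint_union_left]
      exact ⟨hd.1, hrs.symm⟩
    · rw [Vars_sub hpq, Set.disjoint_union_left] at hd
      refine key p (q + h) hp (hq.add h2 hd.2) ?_ (by ring)
      rw [Vars_add hd.2, Set.disjoint_union_right]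
      exact ⟨hpq, hd.1⟩
    · rw [Vars_sub hpq, Vars_sub hrs, Set.disjoint_union_left, Set.disjoint_union_right,
        Set.disjoint_union_right] at hd
      obtain ⟨⟨d1, d2⟩, d3, d4⟩ := hd
      refine key (p + s) (q + r) (hp.add hs d2) (hq.add hr d3) ?_ (by ring)
      rw [Vars_add d2, Vars_add d3, Set.disjoint_union_left, Set.disjoint_union_right,
        Set.disjoint_union_right]
      exact ⟨⟨hpq, d1⟩, d4.symm, hrs.symm⟩
  | @mul g h a b hd =>
    have hc : (Vars g).ncard + (Vars h).ncard = n := by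
      rw [← hn, Vars_mul hd a.ne_zero b.ne_zero, card_union a b hd]
    have := a.card_pos
    have := b.card_pos
    obtain ⟨o₁, h1⟩ := ih _ (by omega) g rfl a
    obtain ⟨o₂, h2⟩ := ih _ (by omega) h rfl b
    rcases h1.splitDiv with h1 | ⟨p, q, hp, hq, hpq, rfl⟩ <;>
    rcases h2.splitDiv with h2 | ⟨r, s, hr, hs, hrs, rfl⟩
    · exact (h1.mul h2 hd).ew
    · rw [Vars_div hrs hr.isAE.ne_zero hs.isAE.ne_zero, Set.disjoint_union_right] at hd
      rw [show g * (r / s) = (g * r) / s by ring]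
      refine ⟨_, (h1.mul hr hd.1).div hs ?_⟩
      rw [h1.vmul hr hd.1, Set.disjoint_union_left]
      exact ⟨hd.2, hrs⟩
    · rw [Vars_div hpq hp.isAE.ne_zero hq.isAE.ne_zero, Set.disjoint_union_left] at hd
      rw [show p / q * h = (p * h) / q by ring]
      refine ⟨_, (hp.mul h2 hd.1).div hq ?_⟩
      rw [hp.vmul h2 hd.1, Set.disjoint_union_left]
      exact ⟨hpq, hd.2.symm⟩
    · rw [Vars_div hpq hp.isAE.ne_zero hq.isAE.ne_zero, Vars_div hrs hr.isAE.ne_zero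
        hs.isAE.ne_zero, Set.disjoint_union_left, Set.disjoint_union_right,
        Set.disjoint_union_right] at hd
      obtain ⟨⟨d1, d2⟩, d3, d4⟩ := hd
      rw [div_mul_div_comm]
      refine ⟨_, (hp.mul hr d1).div (hq.mul hs d4) ?_⟩
      rw [hp.vmul hr d1, hq.vmul hs d4, Set.disjoint_union_left, Set.disjoint_union_right,
        Set.disjoint_union_right]
      exact ⟨⟨hpq, d2⟩, d3.symm, hrs⟩
  | @div g h a b hd =>
    have hc : (Vars g).ncard + (Vars h).ncard = n := by
      rw [← hn, Vars_div hd a.ne_zero b.ne_zero, card_union a b hd]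
    have := a.card_pos
    have := b.card_pos
    obtain ⟨o₁, h1⟩ := ih _ (by omega) g rfl a
    obtain ⟨o₂, h2⟩ := ih _ (by omega) h rfl b
    rcases h1.splitDiv with h1 | ⟨p, q, hp, hq, hpq, rfl⟩ <;>
    rcases h2.splitDiv with h2 | ⟨r, s, hr, hs, hrs, rfl⟩
    · exact ⟨_, h1.div h2 hd⟩
    · rw [Vars_div hrs hr.isAE.ne_zero hs.isAE.ne_zero, Set.disjoint_union_right] at hd
      rw [div_div_eq_mul_div]
      refine ⟨_, (h1.mul hs hd.2).div hr ?_⟩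
      rw [h1.vmul hs hd.2, Set.disjoint_union_left]
      exact ⟨hd.1, hrs.symm⟩
    · rw [Vars_div hpq hp.isAE.ne_zero hq.isAE.ne_zero, Set.disjoint_union_left] at hd
      rw [div_div]
      refine ⟨_, hp.div (hq.mul h2 hd.2) ?_⟩
      rw [hq.vmul h2 hd.2, Set.disjoint_union_right]
      exact ⟨hpq, hd.1⟩
    · rw [Vars_div hpq hp.isAE.ne_zero hq.isAE.ne_zero, Vars_div hrs hr.isAE.ne_zero
        hs.isAE.ne_zero, Set.disjoint_union_left, Set.disjoint_union_right,
        Set.disjoint_union_right] at hd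
      obtain ⟨⟨d1, d2⟩, d3, d4⟩ := hd
      rw [div_div_div_eq]
      refine ⟨_, (hp.mul hs d2).div (hq.mul hr d3) ?_⟩
      rw [hp.vmul hs d2, hq.vmul hr d3, Set.disjoint_union_left, Set.disjoint_union_right,
        Set.disjoint_union_right]
      exact ⟨⟨hpq, d1⟩, d4.symm, hrs.symm⟩

lemma pair_lemma {S X Y Z W : Set ℕ} (hX : X.Nonempty) (hY : Y.Nonempty) (hZ : Z.Nonempty)
    (hW : W.Nonempty) (hXS : X ⊆ S) (hYS : Y ⊆ S) (hZS : Z ⊆ S) (hWS : W ⊆ S)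
    (h1 : S ⊆ X ∪ Y) (h2 : S ⊆ Z ∪ W) :
    ∃ x ∈ X, ∃ y ∈ Y, (x ∈ Z ∧ y ∈ W) ∨ (x ∈ W ∧ y ∈ Z) := by
  obtain ⟨x, hx⟩ := hX
  obtain ⟨y, hy⟩ := hY
  obtain ⟨z, hz⟩ := hZ
  obtain ⟨w, hw⟩ := hW
  have a := h2 (hXS hx)
  have b := h2 (hYS hy)
  have c := h1 (hZS hz)
  have d := h1 (hWS hw)
  simp only [Set.mem_union] at a b c d
  rcases a with a | a
  · rcases b with b | b
    · rcases d with d | d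
      · exact ⟨w, d, y, hy, .inr ⟨hw, b⟩⟩
      · exact ⟨x, hx, w, d, .inl ⟨a, hw⟩⟩
    · exact ⟨x, hx, y, hy, .inl ⟨a, b⟩⟩
  · rcases b with b | b
    · exact ⟨x, hx, y, hy, .inr ⟨a, b⟩⟩
    · rcases c with c | c
      · exact ⟨z, c, y, hy, .inl ⟨hz, b⟩⟩
      · exact ⟨x, hx, z, c, .inr ⟨a, hz⟩⟩

/-- Partition of the variables of `f` into two nonempty classes. -/
structure VPart (f : K) (X Y : Set ℕ) : Prop where
  hX : X.Nonempty
  hY : Y.Nonempty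
  hd : Disjoint X Y
  he : Vars f = X ∪ Y

lemma VPart.pair {f g : K} {X Y Z W : Set ℕ} (h : VPart f X Y) (h' : VPart g Z W)
    (e : Vars f = Vars g) : ∃ x ∈ X, ∃ y ∈ Y, (x ∈ Z ∧ y ∈ W) ∨ (x ∈ W ∧ y ∈ Z) := by
  apply pair_lemma (S := Vars f) h.hX h.hY h'.hX h'.hY
  · rw [h.he]; exact Set.subset_union_left
  · rw [h.he]; exact Set.subset_union_right
  · rw [e, h'.he]; exact Set.subset_union_left
  · rw [e, h'.he]; exact Set.subset_union_right
  · exact h.he.subset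
  · exact e ▸ h'.he.subset

lemma VPart.left {f : K} {X Y : Set ℕ} (h : VPart f X Y) {x : ℕ} (hx : x ∈ X) : D x f ≠ 0 :=
  mem_Vars.1 (h.he ▸ Or.inl hx)
lemma VPart.right {f : K} {X Y : Set ℕ} (h : VPart f X Y) {x : ℕ} (hx : x ∈ Y) : D x f ≠ 0 :=
  mem_Vars.1 (h.he ▸ Or.inr hx)

lemma VPart.not_var {X Y : Set ℕ} {i : ℕ} (h : VPart (Xv i) X Y) : False := by
  obtain ⟨x, hx⟩ := h.hX
  obtain ⟨y, hy⟩ := h.hY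
  have h1 : x ∈ Vars (Xv i) := h.he ▸ Or.inl hx
  have h2 : y ∈ Vars (Xv i) := h.he ▸ Or.inr hy
  rw [Vars_Xv, Set.mem_singleton_iff] at h1 h2
  subst h1; subst h2
  exact Set.disjoint_left.1 h.hd hx hy

def ASep (f : K) : Prop := ∃ X Y, VPart f X Y ∧ ∀ x ∈ X, ∀ y ∈ Y, D x (D y f) = 0
def MSep (f : K) : Prop := ∃ X Y, VPart f X Y ∧ ∀ x ∈ X, ∀ y ∈ Y, f * D x (D y f) = D x f * D y f
def Atom (f : K) : Prop := ASep f ∨ ∃ i, f = Xv i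
def MTerm (f : K) : Prop := MSep f ∨ ∃ i, f = Xv i

lemma ASep.not_term {f : K} (h : ASep f) (h' : MTerm f) : False := by
  obtain ⟨X, Y, hp, h1⟩ := h
  rcases h' with ⟨Z, W, hp', h2⟩ | ⟨i, rfl⟩
  · obtain ⟨x, hx, y, hy, h | h⟩ := hp.pair hp' rfl
    · have := h2 x h.1 y h.2
      rw [h1 x hx y hy, mul_zero] at this
      exact mul_ne_zero (hp.left hx) (hp.right hy) this.symm
    · have := h2 y h.2 x h.1
      rw [D_comm, h1 x hx y hy, mul_zero] at this
      exact mul_ne_zero (hp.right hy) (hp.left hx) this.symm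
  · exact hp.not_var

lemma D_D_zero {g : K} {y : ℕ} (h : D y g = 0) (x : ℕ) : D x (D y g) = 0 := by
  rw [h, D_zero]

lemma EW.aux {f : K} {o : Op} (h : EW f o) :
    ((o = .add ∨ o = .sub) → ASep f) ∧ ((o = .mul ∨ o = .div) → MTerm f) := by
  cases h with
  | var i => exact ⟨by simp, fun _ => .inr ⟨i, rfl⟩⟩
  | @add g h _ _ a b hd =>
    refine ⟨fun _ => ⟨Vars g, Vars h, ⟨a.nonempty, b.nonempty, hd, Vars_add hd⟩, ?_⟩, by simp⟩
    intro x hx y hy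
    have h1 := notMem_Vars.1 (Set.disjoint_left.1 hd hx)
    have h2 := notMem_Vars.1 (Set.disjoint_right.1 hd hy)
    rw [D_add, D_add, D_comm x y h, D_D_zero h1, D_D_zero h2, add_zero]
  | @sub g h _ _ a b hd =>
    refine ⟨fun _ => ⟨Vars g, Vars h, ⟨a.nonempty, b.nonempty, hd, Vars_sub hd⟩, ?_⟩, by simp⟩
    intro x hx y hy
    have h1 := notMem_Vars.1 (Set.disjoint_left.1 hd hx)
    have h2 := notMem_Vars.1 (Set.disjoint_right.1 hd hy)
    rw [D_sub, D_sub, D_comm x y h, D_D_zero h1, D_D_zero h2, sub_zero]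
  | @mul g h _ _ a b hd =>
    refine ⟨by simp, fun _ => .inl ⟨Vars g, Vars h, ⟨a.nonempty, b.nonempty, hd,
      Vars_mul hd a.ne_zero b.ne_zero⟩, ?_⟩⟩
    intro x hx y hy
    have h1 := notMem_Vars.1 (Set.disjoint_left.1 hd hx)
    have h2 := notMem_Vars.1 (Set.disjoint_right.1 hd hy)
    simp only [D_mul, D_add, h1, h2, D_comm x y h, D_zero]
    ring
  | @div g h _ _ a b hd =>
    have hh := b.ne_zero
    refine ⟨by simp, fun _ => .inl ⟨Vars g, Vars h, ⟨a.nonempty, b.nonempty, hd,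
      Vars_div hd a.ne_zero hh⟩, ?_⟩⟩
    intro x hx y hy
    have h1 := notMem_Vars.1 (Set.disjoint_left.1 hd hx)
    have h2 := notMem_Vars.1 (Set.disjoint_right.1 hd hy)
    rw [D_div y _ hh, D_div x _ (pow_ne_zero 2 hh), D_div x _ hh, pow_two h]
    simp only [D_sub, D_mul, h1, h2, D_comm x y h, D_zero]
    field_simp
    ring

/-- Logarithmic derivative. -/
def L (i : ℕ) (f : K) : K := D i f / f

lemma logD_mul (i : ℕ) {f g : K} (hf : f ≠ 0) (hg : g ≠ 0) : L i (f * g) = L i f + L i g := by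
  simp only [L, D_mul]; field_simp

lemma logD_div (i : ℕ) {f g : K} (hf : f ≠ 0) (hg : g ≠ 0) : L i (f / g) = L i f - L i g := by
  simp only [L, D_div _ _ hg]; field_simp

lemma logD_zero_of {i : ℕ} {f : K} (h : i ∉ Vars f) : L i f = 0 := by
  rw [L, notMem_Vars.1 h, zero_div]

lemma mem_Vars_iff_L {i : ℕ} {f : K} : i ∈ Vars f ↔ L i f ≠ 0 := by
  constructor
  · intro h
    exact div_ne_zero (mem_Vars.1 h) (ne_zero_of_mem h)
  · intro h
    by_contra hn
    exact h (logD_zero_of hn)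

lemma D_L (i j : ℕ) {f : K} (hf : f ≠ 0) :
    D i (L j f) = (f * D i (D j f) - D i f * D j f) / f ^ 2 := by
  rw [L, D_div _ _ hf]; ring

lemma D_L_comm (i j : ℕ) {f : K} (hf : f ≠ 0) : D i (L j f) = D j (L i f) := by
  rw [D_L _ _ hf, D_L _ _ hf, D_comm i j]; ring

def Qpos (f : K) : Prop := ∀ x ∈ Vars f, ∃ v, Atom v ∧ x ∈ Vars v ∧ ∀ y ∈ Vars v, L y f = L y v
def Qneg (f : K) : Prop := ∃ v, Atom v ∧ ∃ x ∈ Vars v, x ∈ Vars f ∧ ∀ y ∈ Vars v, L y f = - L y v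

lemma EW.qpos {f : K} {o : Op} (h : EW f o) (ho : o ≠ .div) : Qpos f := by
  induction h with
  | var i => exact fun x hx => ⟨_, .inr ⟨i, rfl⟩, hx, fun _ _ => rfl⟩
  | add a b hd h1 h2 e1 e2 =>
    exact fun x hx => ⟨_, .inl ((EW.add a b hd h1 h2 e1 e2).aux.1 (by simp)), hx, fun _ _ => rfl⟩
  | sub a b hd h1 h2 hf e1 e2 =>
    exact fun x hx => ⟨_, .inl ((EW.sub a b hd h1 h2 hf e1 e2).aux.1 (by simp)), hx, fun _ _ => rfl⟩
  | div => exact absurd rfl ho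
  | mul a b hd h1 h2 e1 e2 i1 i2 =>
    intro x hx
    rw [Vars_mul hd a.ne_zero b.ne_zero] at hx
    rcases hx with hx | hx
    · obtain ⟨v, hv, hxv, hl⟩ := i1 h1 x hx
      refine ⟨v, hv, hxv, fun y hy => ?_⟩
      have : y ∈ Vars _ := mem_Vars_iff_L.2 (hl y hy ▸ mem_Vars_iff_L.1 hy)
      rw [logD_mul y a.ne_zero b.ne_zero, hl y hy, logD_zero_of (Set.disjoint_left.1 hd this), add_zero]
    · obtain ⟨v, hv, hxv, hl⟩ := i2 h2 x hx
      refine ⟨v, hv, hxv, fun y hy => ?_⟩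
      have : y ∈ Vars _ := mem_Vars_iff_L.2 (hl y hy ▸ mem_Vars_iff_L.1 hy)
      rw [logD_mul y a.ne_zero b.ne_zero, hl y hy, logD_zero_of (Set.disjoint_right.1 hd this), zero_add]

lemma EW.qneg {f : K} (h : EW f .div) : Qneg f := by
  cases h with
  | div a b hd h1 h2 e1 e2 =>
    obtain ⟨x, hx⟩ := b.nonempty
    obtain ⟨v, hv, hxv, hl⟩ := e2.qpos h2 x hx
    refine ⟨v, hv, x, hxv, ?_, fun y hy => ?_⟩
    · rw [Vars_div hd a.ne_zero b.ne_zero]; exact .inr hx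
    · have : y ∈ Vars _ := mem_Vars_iff_L.2 (hl y hy ▸ mem_Vars_iff_L.1 hy)
      rw [logD_div y a.ne_zero b.ne_zero, hl y hy, logD_zero_of (Set.disjoint_right.1 hd this), zero_sub]

/-- An atom cannot have its log-derivatives separated. -/
lemma Atom.subset {v : K} (hv : Atom v) {U : Set ℕ} {x : ℕ} (hx : x ∈ Vars v) (hxU : x ∈ U)
    (h : ∀ x ∈ Vars v, x ∈ U → ∀ y ∈ Vars v, y ∉ U → D x (L y v) = 0) : Vars v ⊆ U := by
  by_contra hn
  obtain ⟨y, hy, hyU⟩ := Set.not_subset.1 hn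
  have hm : MSep v := by
    refine ⟨Vars v ∩ U, Vars v \ U, ⟨⟨x, hx, hxU⟩, ⟨y, hy, hyU⟩, ?_, ?_⟩, ?_⟩
    · exact Set.disjoint_left.2 fun a ha hb => hb.2 ha.2
    · exact (Set.inter_union_sdiff _ _).symm
    · intro a ha b hb
      have h0 := ne_zero_of_mem hx
      have := h a ha.1 ha.2 b hb.1 hb.2
      rw [D_L _ _ h0, div_eq_zero_iff] at this
      exact sub_eq_zero.1 (this.resolve_right (pow_ne_zero 2 h0))
  rcases hv with hv | ⟨i, rfl⟩
  · exact hv.not_term (.inl hm)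
  · obtain ⟨X, Y, hp, -⟩ := hm
    exact hp.not_var

lemma Q_absurd {f : K} (h1 : Qpos f) (h2 : Qneg f) : False := by
  obtain ⟨u, hu, x, hxu, hxf, hlu⟩ := h2
  obtain ⟨v, hv, hxv, hlv⟩ := h1 x hxf
  have hf := ne_zero_of_mem hxf
  have hu0 := ne_zero_of_mem hxu
  have hv0 := ne_zero_of_mem hxv
  have e1 : Vars v ⊆ Vars u := by
    refine hv.subset hxv hxu fun a ha hau b hb hbu => ?_
    rw [← hlv b hb, D_L_comm _ _ hf, hlu a hau, D_neg, D_L_comm _ _ hu0, logD_zero_of hbu, D_zero,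
      neg_zero]
  have e2 : Vars u ⊆ Vars v := by
    refine hu.subset hxu hxv fun a ha hav b hb hbv => ?_
    rw [show L b u = - L b f by rw [hlu b hb, neg_neg], D_neg, D_L_comm _ _ hf, hlv a hav,
      D_L_comm _ _ hv0, logD_zero_of hbv, D_zero, neg_zero]
  have e : Vars v = Vars u := e1.antisymm e2
  have hl : ∀ y ∈ Vars v, L y v = - L y u := fun y hy => by rw [← hlv y hy, hlu y (e1 hy)]
  rcases hv with ⟨X, Y, hp, hs⟩ | ⟨i, rfl⟩
  · rcases hu with ⟨Z, W, hp', hs'⟩ | ⟨j, rfl⟩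
    · -- the key computation
      have key : ∀ a ∈ X, ∀ b ∈ Y, D a (D b u) ≠ 0 := by
        intro a ha b hb h0
        have hav : a ∈ Vars v := hp.he ▸ Or.inl ha
        have hbv : b ∈ Vars v := hp.he ▸ Or.inr hb
        have la := hl a hav
        have lb := hl b hbv
        have hdl := congrArg (D a) (show L b v + L b u = 0 by rw [lb]; ring)
        rw [D_add, D_L _ _ hv0, D_L _ _ hu0, hs a ha b hb, h0, D_zero] at hdl
        have : L a v * L b v + L a u * L b u = 0 := by
          simp only [L]
          field_simp
          field_simp at hdl
          linear_combination -hdl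
        rw [la, lb] at this
        have h2 : L a u * L b u = 0 := by linear_combination this / 2
        exact mul_ne_zero (mem_Vars_iff_L.1 (e1 hav)) (mem_Vars_iff_L.1 (e1 hbv)) h2
      obtain ⟨a, ha, b, hb, h | h⟩ := hp.pair hp' e
      · exact key a ha b hb (hs' a h.1 b h.2)
      · exact key a ha b hb (by rw [D_comm]; exact hs' b h.2 a h.1)
    · have : VPart (Xv j) X Y := ⟨hp.hX, hp.hY, hp.hd, e ▸ hp.he⟩
      exact this.not_var
  · rcases hu with ⟨Z, W, hp', -⟩ | ⟨j, rfl⟩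
    · have : VPart (Xv i) Z W := ⟨hp'.hX, hp'.hY, hp'.hd, e ▸ hp'.he⟩
      exact this.not_var
    · rw [Vars_Xv, Vars_Xv, Set.singleton_eq_singleton_iff] at e
      subst e
      have h1 := hl x hxv
      have h2 : L x (Xv i) = 0 := by linear_combination h1 / 2
      exact mem_Vars_iff_L.1 hxv h2

def Spos (f : K) : Prop := ∀ x ∈ Vars f, ∃ u, MTerm u ∧ IsAE u ∧ x ∈ Vars u ∧
  (∀ y ∈ Vars u, D y f = D y u) ∧ (IsAE (-u) → IsAE (-f))
def Sneg (f : K) : Prop := ∃ u, MTerm u ∧ ¬ IsAE (-u) ∧ ∃ x ∈ Vars u, x ∈ Vars f ∧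
  ∀ y ∈ Vars u, D y f = - D y u

lemma EW.spos {f : K} {o : Op} (h : EW f o) (ho : o ≠ .sub) : Spos f := by
  induction h with
  | var i => exact fun x hx => ⟨_, .inr ⟨i, rfl⟩, .var i, hx, fun _ _ => rfl, id⟩
  | mul a b hd h1 h2 e1 e2 =>
    exact fun x hx => ⟨_, (EW.mul a b hd h1 h2 e1 e2).aux.2 (by simp), .mul a b hd, hx,
      fun _ _ => rfl, id⟩
  | div a b hd h1 h2 e1 e2 =>
    exact fun x hx => ⟨_, (EW.div a b hd h1 h2 e1 e2).aux.2 (by simp), .div a b hd, hx,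
      fun _ _ => rfl, id⟩
  | sub => exact absurd rfl ho
  | @add g h _ _ a b hd h1 h2 e1 e2 i1 i2 =>
    intro x hx
    rw [Vars_add hd] at hx
    rcases hx with hx | hx
    · obtain ⟨v, hv, hva, hxv, hl, hn⟩ := i1 h1 x hx
      refine ⟨v, hv, hva, hxv, fun y hy => ?_, fun hh => ?_⟩
      · have : y ∈ Vars g := mem_Vars.2 (hl y hy ▸ mem_Vars.1 hy)
        rw [D_add, hl y hy, notMem_Vars.1 (Set.disjoint_left.1 hd this), add_zero]
      · rw [show -(g + h) = -g - h by ring]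
        exact .sub (hn hh) b (by rwa [Vars_neg])
    · obtain ⟨v, hv, hva, hxv, hl, hn⟩ := i2 h2 x hx
      refine ⟨v, hv, hva, hxv, fun y hy => ?_, fun hh => ?_⟩
      · have : y ∈ Vars h := mem_Vars.2 (hl y hy ▸ mem_Vars.1 hy)
        rw [D_add, hl y hy, notMem_Vars.1 (Set.disjoint_right.1 hd this), zero_add]
      · rw [show -(g + h) = -h - g by ring]
        exact .sub (hn hh) a (by rw [Vars_neg]; exact hd.symm)

lemma EW.sneg {f : K} (h : EW f .sub) : Sneg f := by
  cases h with
  | @sub g h _ _ a b hd h1 h2 hf e1 e2 =>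
    obtain ⟨x, hx⟩ := b.nonempty
    obtain ⟨v, hv, hva, hxv, hl, hn⟩ := e2.spos h2 x hx
    refine ⟨v, hv, fun hh => hf.2 (hn hh), x, hxv, ?_, fun y hy => ?_⟩
    · rw [Vars_sub hd]; exact .inr hx
    · have : y ∈ Vars h := mem_Vars.2 (hl y hy ▸ mem_Vars.1 hy)
      rw [D_sub, hl y hy, notMem_Vars.1 (Set.disjoint_right.1 hd this), zero_sub]

/-- A term cannot have its derivatives separated. -/
lemma MTerm.subset {v : K} (hv : MTerm v) {U : Set ℕ} {x : ℕ} (hx : x ∈ Vars v) (hxU : x ∈ U)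
    (h : ∀ x ∈ Vars v, x ∈ U → ∀ y ∈ Vars v, y ∉ U → D x (D y v) = 0) : Vars v ⊆ U := by
  by_contra hn
  obtain ⟨y, hy, hyU⟩ := Set.not_subset.1 hn
  have hm : ASep v := by
    refine ⟨Vars v ∩ U, Vars v \ U, ⟨⟨x, hx, hxU⟩, ⟨y, hy, hyU⟩, ?_, ?_⟩, ?_⟩
    · exact Set.disjoint_left.2 fun a ha hb => hb.2 ha.2
    · exact (Set.inter_union_sdiff _ _).symm
    · exact fun a ha b hb => h a ha.1 ha.2 b hb.1 hb.2
  exact hm.not_term hv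

lemma S_absurd {f : K} (h1 : Spos f) (h2 : Sneg f) : False := by
  obtain ⟨t, ht, htn, x, hxt, hxf, hlt⟩ := h2
  obtain ⟨u, hu, hua, hxu, hlu, -⟩ := h1 x hxf
  have e1 : Vars u ⊆ Vars t := by
    refine hu.subset hxu hxt fun a ha hat b hb hbt => ?_
    rw [← hlu b hb, D_comm, hlt a hat, D_neg, D_comm, notMem_Vars.1 hbt, D_zero, neg_zero]
  have e2 : Vars t ⊆ Vars u := by
    refine ht.subset hxt hxu fun a ha hau b hb hbu => ?_
    rw [show D b t = - D b f by rw [hlt b hb, neg_neg], D_neg, D_comm, hlu a hau,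
      D_comm, notMem_Vars.1 hbu, D_zero, neg_zero]
  have e : Vars u = Vars t := e1.antisymm e2
  have hl : ∀ y ∈ Vars u, D y u = - D y t := fun y hy => by rw [← hlu y hy, hlt y (e1 hy)]
  rcases hu with ⟨X, Y, hp, hs⟩ | ⟨i, rfl⟩
  · rcases ht with ⟨Z, W, hp', hs'⟩ | ⟨j, rfl⟩
    · have key : ∀ a ∈ X, ∀ b ∈ Y, t * D a (D b t) = D a t * D b t → False := by
        intro a ha b hb h
        have hav : a ∈ Vars u := hp.he ▸ Or.inl ha
        have hbv : b ∈ Vars u := hp.he ▸ Or.inr hb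
        have h3 := hs a ha b hb
        rw [hl b hbv, hl a hav, D_neg] at h3
        have h4 : (u + t) * D a (D b t) = 0 := by linear_combination h - h3
        rcases mul_eq_zero.1 h4 with h5 | h5
        · apply htn
          rwa [show -t = u by linear_combination -h5]
        · rw [h5, mul_zero] at h
          exact mul_ne_zero (mem_Vars.1 (e1 hav)) (mem_Vars.1 (e1 hbv)) h.symm
      obtain ⟨a, ha, b, hb, h | h⟩ := hp.pair hp' e
      · exact key a ha b hb (hs' a h.1 b h.2)
      · exact key a ha b hb (by rw [D_comm, mul_comm (D a t)]; exact hs' b h.2 a h.1)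
    · have : VPart (Xv j) X Y := ⟨hp.hX, hp.hY, hp.hd, e ▸ hp.he⟩
      exact this.not_var
  · rcases ht with ⟨Z, W, hp', -⟩ | ⟨j, rfl⟩
    · have : VPart (Xv i) Z W := ⟨hp'.hX, hp'.hY, hp'.hd, e ▸ hp'.he⟩
      exact this.not_var
    · rw [Vars_Xv, Vars_Xv, Set.singleton_eq_singleton_iff] at e
      subst e
      have h1 := hl x hxu
      have h2 : D x (Xv i) = 0 := by linear_combination h1 / 2
      exact mem_Vars.1 hxu h2

lemma EW.unique {f : K} {o o' : Op} (h : EW f o) (h' : EW f o') : o = o' := by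
  have ha := h.aux
  have ha' := h'.aux
  have t1 : (o = .add ∨ o = .sub) → (o' = .mul ∨ o' = .div) → False :=
    fun a b => (ha.1 a).not_term (ha'.2 b)
  have t2 : (o' = .add ∨ o' = .sub) → (o = .mul ∨ o = .div) → False :=
    fun a b => (ha'.1 a).not_term (ha.2 b)
  have t3 : o ≠ .sub → o' = .sub → False := fun a b => S_absurd (h.spos a) (b ▸ h').sneg
  have t4 : o' ≠ .sub → o = .sub → False := fun a b => S_absurd (h'.spos a) (b ▸ h).sneg
  have t5 : o ≠ .div → o' = .div → False := fun a b => Q_absurd (h.qpos a) (b ▸ h').qneg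
  have t6 : o' ≠ .div → o = .div → False := fun a b => Q_absurd (h'.qpos a) (b ▸ h).qneg
  clear ha ha' h h'
  cases o <;> cases o' <;> simp_all

/-- Every arithmetic expression ends with exactly one of the four
operators `+, −, ×, ÷`; that is, `𝒜 = 𝒜(+) ⊍ 𝒜(−) ⊍ 𝒜(×) ⊍ 𝒜(÷)`. -/
theorem ae_ends_with_exactly_one_op (f : K) : IsAE f ↔ ∃! o : Op, EndsWith f o := by
  constructor
  · intro h
    obtain ⟨o, ho⟩ := exists_ew _ f rfl h
    exact ⟨o, ho.ends, fun o' h' => h'.ew.unique ho⟩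
  · rintro ⟨o, ho, -⟩
    exact ho.ew.isAE

end
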